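/- Let A be a positive bounded linear operator on H, let (e_j)_{j∈J} be a Hilbert (orthonormal) basis of H, and let (v_i)_{i=1,…,d} be an orthonormal basis of V. Then, as an identity in [0, ∞], Σ_{j∈J} ⟨A e_j, e_j⟩_H = ∫_N Σ_{i=1}^d ⟨K^A(x,x) v_i, v_i⟩_V dμ(x). (That is, the trace of A equals the integral over the diagonal of the trace of the full symbol, Tr A = ∫_N Tr K^A(x,x) dμ(x).) -/

import Mathlib

open MeasureTheory
open scoped ComplexInnerProductSpace ComplexOrder ENNReal

/-!
Write `A = B * B` with `B` the positive square root of `A`. On the left,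
`⟪A e_j, e_j⟫ = ‖B e_j‖² = ∫ ‖K_x B e_j‖² dμ(x)`, by the isometric embedding of `H`
(`ofReal_norm_sq_eq_lintegral`). On the right, `⟪K_x A K_x^* v_i, v_i⟫ = ‖B K_x^* v_i‖²`, and
Parseval in `H` and then in `V` turns the sum over `i` into `∑_j ‖K_x B e_j‖²`
(`sum_norm_sq_adjoint_eq_tsum`). It remains to exchange the sum over `j` with the integral. The
index set may be uncountable, so monotone convergence does not apply directly; but if the sum
is finite then `B e_j = 0` outside a countable set of indices, and if it is infinite the
inequality `∑ ∫ ≤ ∫ ∑` suffices (`tsum_lintegral_eq_lintegral_tsum`).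
-/

/-- Tonelli for a sum over a possibly uncountable index set, provided that every term of integral
zero vanishes identically and not merely almost everywhere. -/
lemma tsum_lintegral_eq_lintegral_tsum {N J : Type*} [MeasurableSpace N] (μ : Measure N)
    (F : J → N → ℝ≥0∞) (hF : ∀ j, AEMeasurable (F j) μ)
    (h0 : ∀ j, ∫⁻ x, F j x ∂μ = 0 → ∀ x, F j x = 0) :
    ∑' j, ∫⁻ x, F j x ∂μ = ∫⁻ x, ∑' j, F j x ∂μ := by
  have hle : ∑' j, ∫⁻ x, F j x ∂μ ≤ ∫⁻ x, ∑' j, F j x ∂μ := by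
    rw [ENNReal.tsum_eq_iSup_sum]
    refine iSup_le fun s => ?_
    rw [← lintegral_finsetSum' s fun j _ => hF j]
    exact lintegral_mono fun x => ENNReal.sum_le_tsum s
  by_cases hfin : ∑' j, ∫⁻ x, F j x ∂μ = ∞
  · rw [hfin] at hle ⊢
    exact (top_le_iff.mp hle).symm
  · set S : Set J := Function.support fun j => ∫⁻ x, F j x ∂μ with hS
    have hcount : S.Countable := Summable.countable_support_ennreal hfin
    have : Countable S := hcount.to_subtype
    have hsum : ∀ x, ∑' j, F j x = ∑' j : S, F j x := fun x =>
      (tsum_subtype_eq_of_support_subset (f := fun j => F j x) fun j hj hj0 =>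
        hj (h0 j hj0 x)).symm
    simp_rw [hsum]
    rw [lintegral_tsum fun j : S => hF j]
    exact (tsum_subtype_eq_of_support_subset (f := fun j => ∫⁻ x, F j x ∂μ) subset_rfl).symm

lemma HilbertBasis.tsum_ofReal_norm_inner_sq {J H : Type*} [NormedAddCommGroup H]
    [InnerProductSpace ℂ H] (e : HilbertBasis J ℂ H) (f : H) :
    ∑' j, ENNReal.ofReal (‖⟪f, e j⟫‖ ^ 2) = ENNReal.ofReal (‖f‖ ^ 2) := by
  have h : HasSum (fun j => ‖⟪f, e j⟫‖ ^ 2) (‖f‖ ^ 2) := by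
    have h1 := Complex.hasSum_re (e.hasSum_inner_mul_inner f f)
    convert! h1 using 1
    · ext j
      rw [← inner_conj_symm (e j) f, Complex.mul_conj, Complex.normSq_eq_norm_sq,
        Complex.ofReal_re]
    · exact (inner_self_eq_norm_sq (𝕜 := ℂ) f).symm
  rw [← h.tsum_eq, ENNReal.ofReal_tsum_of_nonneg (fun _ => by positivity) h.summable]

/-- The isometric embedding as an identity in `[0, ∞]`. Integrability of `‖K_y g‖²` need not be
assumed: a non-integrable function would have Bochner integral `0 = ‖g‖²`, forcing `g = 0`. -/
lemma ofReal_norm_sq_eq_lintegral {N V H : Type*} [NormedAddCommGroup V] [InnerProductSpace ℂ V]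
    [NormedAddCommGroup H] [InnerProductSpace ℂ H] [MeasurableSpace N] (μ : Measure N)
    (K : N → H →L[ℂ] V) (hembed : ∀ g h : H, ⟪g, h⟫ = ∫ y, ⟪(K y) g, (K y) h⟫ ∂μ) (g : H) :
    ENNReal.ofReal (‖g‖ ^ 2) = ∫⁻ y, ENNReal.ofReal (‖K y g‖ ^ 2) ∂μ := by
  have hreal : ‖g‖ ^ 2 = ∫ y, ‖K y g‖ ^ 2 ∂μ := by
    have h := hembed g g
    simp_rw [inner_self_eq_norm_sq_to_K, ← RCLike.ofReal_pow] at h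
    rw [integral_ofReal] at h
    exact RCLike.ofReal_injective h
  have hint : Integrable (fun y => ‖K y g‖ ^ 2) μ := by
    by_contra hn
    rw [integral_undef hn] at hreal
    have hg : g = 0 := by simpa using hreal
    simp [hg] at hn
  rw [hreal, ofReal_integral_eq_lintegral_ofReal hint (ae_of_all _ fun _ => by positivity)]

/-- Both sides are the squared Hilbert–Schmidt norm of `T B`, computed in `V` and in `H`. -/
lemma sum_norm_sq_adjoint_eq_tsum {V H J : Type*} [NormedAddCommGroup V] [InnerProductSpace ℂ V]
    [FiniteDimensional ℂ V] [NormedAddCommGroup H] [InnerProductSpace ℂ H] [CompleteSpace H]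
    (T : H →L[ℂ] V) (B : H →L[ℂ] H) (hB : ∀ f g : H, ⟪B f, g⟫ = ⟪f, B g⟫)
    (e : HilbertBasis J ℂ H) {d : ℕ} (v : OrthonormalBasis (Fin d) ℂ V) :
    ∑ i, ENNReal.ofReal (‖B (ContinuousLinearMap.adjoint T (v i))‖ ^ 2) =
      ∑' j, ENNReal.ofReal (‖T (B (e j))‖ ^ 2) := by
  simp_rw [← e.tsum_ofReal_norm_inner_sq, hB, ContinuousLinearMap.adjoint_inner_left]
  rw [← Summable.tsum_finsetSum fun _ _ => ENNReal.summable]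
  refine tsum_congr fun j => ?_
  rw [← ENNReal.ofReal_sum_of_nonneg fun _ _ => by positivity, v.sum_sq_norm_inner_right]

/-- for a positive bounded operator `A`, the trace of `A` equals the integral
over the diagonal of the trace of the full symbol: `Tr A = ∫_N Tr K^A(x,x) dμ(x)`
(an identity in `[0,∞]`). -/
theorem berezin_full_symbol_trace
    {N V H : Type*} [NormedAddCommGroup V] [InnerProductSpace ℂ V] [FiniteDimensional ℂ V]
    [NormedAddCommGroup H] [InnerProductSpace ℂ H] [CompleteSpace H]
    [MeasurableSpace N] (μ : Measure N)
    (K : N → H →L[ℂ] V)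
    (htotal : (Submodule.span ℂ
        {f : H | ∃ (x : N) (v : V), f = ContinuousLinearMap.adjoint (K x) v}).topologicalClosure
      = ⊤)
    (hmeas : ∀ f : H, AEStronglyMeasurable (fun x => (K x) f) μ)
    (hembed : ∀ g h : H, ⟪g, h⟫ = ∫ y, ⟪(K y) g, (K y) h⟫ ∂μ)
    (A : H →L[ℂ] H) (hA : ∀ f : H, 0 ≤ ⟪A f, f⟫)
    {J : Type*} (e : HilbertBasis J ℂ H)
    {d : ℕ} (v : OrthonormalBasis (Fin d) ℂ V) :
    ∑' j : J, ENNReal.ofReal (⟪A (e j), e j⟫).re =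
      ∫⁻ x,
        ∑ i : Fin d,
          ENNReal.ofReal
            (⟪(K x) (A (ContinuousLinearMap.adjoint (K x) (v i))), v i⟫).re ∂μ := by
  have hpos : 0 ≤ A := by
    rw [ContinuousLinearMap.nonneg_iff_isPositive, ContinuousLinearMap.isPositive_iff_complex]
    intro f
    obtain ⟨h1, h2⟩ := Complex.nonneg_iff.mp (hA f)
    exact ⟨Complex.ext rfl h2, h1⟩
  obtain ⟨B, hB, hBA⟩ : ∃ B : H →L[ℂ] H, (∀ f g : H, ⟪B f, g⟫ = ⟪f, B g⟫) ∧ B * B = A :=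
    ⟨CFC.sqrt A,
      ((ContinuousLinearMap.nonneg_iff_isPositive _).mp (CFC.sqrt_nonneg A)).isSymmetric,
      CFC.sqrt_mul_sqrt_self A hpos⟩
  have hAB : ∀ f : H, (⟪A f, f⟫).re = ‖B f‖ ^ 2 := fun f => by
    rw [← hBA, mul_apply_eq_comp, hB]
    exact inner_self_eq_norm_sq (𝕜 := ℂ) _
  simp_rw [← ContinuousLinearMap.adjoint_inner_right (K _), hAB,
    sum_norm_sq_adjoint_eq_tsum _ B hB e v, ofReal_norm_sq_eq_lintegral μ K hembed]
  refine tsum_lintegral_eq_lintegral_tsum μ _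
    (fun j => ((hmeas (B (e j))).norm.aemeasurable.pow_const 2).ennreal_ofReal) fun j hj x => ?_
  rw [← ofReal_norm_sq_eq_lintegral μ K hembed, ENNReal.ofReal_eq_zero] at hj
  have hz : B (e j) = 0 := by
    have := le_antisymm hj (by positivity)
    simpa using this
  simp [hz]
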